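/- For every countable preordered set (P, ≼) there is a map f : P → F_2 such that for all p, q ∈ P, p ≼ q iff f(p) ⊢ f(q). (Hence any logic with countably many formulas can be translated, respecting single-premise consequence, into 2-variable intuitionistic propositional logic.) -/

import Mathlib

/-!
The distributive lattice freely generated by countably many elements already contains every
countable preorder, and it embeds into the Lindenbaum algebra on two variables.

*Preorders into lattice terms.*  Transport the preorder to `ℕ` along a surjection `ℕ → P` and
let `φ₀, φ₁, …` be generators.  Define recursively
`F n = ⋁ {F i | i < n, i ≼ n} ∨ (φₙ ∧ ⋀ {F i | i < n, n ≼ i})`.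
Then `m ≼ n` implies `F m ⊢ F n` (`embed_mono`).  Conversely, if at some world of a Kripke model
the `φₙ` that are forced are exactly those with `n` in an upper set `S`, then `F n` is forced
there iff `n ∈ S` (`forces_embed`); taking `S = {s | m ≼ s}` refutes `F m ⊢ F n` when `m ⋠ n`.

*Independent formulas in two variables.*  It remains to find formulas `φₙ` such that any set
`S ⊆ ℕ` is realised as `{n | φₙ forced}` at some world (`forces_gen_root`).  The variable `p`
supplies the Rieger–Nishimura ladder, in which formulas `Eₙ` define the sets of the first `n`
points (`forces_ladder`).  The variable `q` is true only at one extra maximal point, so `¬q` cuts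
out the ladder.  A point `mark n` sees the extra point and exactly the ladder points `≤ n`, and
`φₙ = (¬q → Eₙ₊₁) → ¬q ∨ (¬q → Eₙ)` fails at `mark n` but at no other mark.  A root seeing the
whole ladder and the marks `n ∉ S` therefore forces exactly the `φₙ` with `n ∈ S`.
-/

/-- Propositional formulas over a set `V` of variables, built from `∧, ∨, →, ⊥, ⊤`.
`¬φ` is the abbreviation `φ → ⊥`. -/
inductive PropForm (V : Type) : Type
  | var : V → PropForm V
  | bot : PropForm V
  | top : PropForm V
  | and : PropForm V → PropForm V → PropForm V
  | or : PropForm V → PropForm V → PropForm V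
  | imp : PropForm V → PropForm V → PropForm V

/-- A natural-deduction style consequence relation.  When the parameter `cl` is `False`
this is exactly the consequence relation `⊢` of intuitionistic propositional logic;
when `cl` is `True` the rule of excluded middle becomes available and it is the
consequence relation `⊢_C` of classical propositional logic. -/
inductive Prov {V : Type} (cl : Prop) : Set (PropForm V) → PropForm V → Prop
  | ax : ∀ {Γ : Set (PropForm V)} {φ}, φ ∈ Γ → Prov cl Γ φ
  | topI : ∀ {Γ}, Prov cl Γ .top
  | botE : ∀ {Γ φ}, Prov cl Γ .bot → Prov cl Γ φ
  | andI : ∀ {Γ φ ψ}, Prov cl Γ φ → Prov cl Γ ψ → Prov cl Γ (.and φ ψ)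
  | andE1 : ∀ {Γ φ ψ}, Prov cl Γ (.and φ ψ) → Prov cl Γ φ
  | andE2 : ∀ {Γ φ ψ}, Prov cl Γ (.and φ ψ) → Prov cl Γ ψ
  | orI1 : ∀ {Γ φ ψ}, Prov cl Γ φ → Prov cl Γ (.or φ ψ)
  | orI2 : ∀ {Γ φ ψ}, Prov cl Γ ψ → Prov cl Γ (.or φ ψ)
  | orE : ∀ {Γ φ ψ χ}, Prov cl Γ (.or φ ψ) → Prov cl (insert φ Γ) χ →
      Prov cl (insert ψ Γ) χ → Prov cl Γ χ
  | impI : ∀ {Γ φ ψ}, Prov cl (insert φ Γ) ψ → Prov cl Γ (.imp φ ψ)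
  | impE : ∀ {Γ φ ψ}, Prov cl Γ (.imp φ ψ) → Prov cl Γ φ → Prov cl Γ ψ
  | em : ∀ {Γ φ}, cl → Prov cl Γ (.or φ (.imp φ .bot))

/-- Intuitionistic consequence `Γ ⊢ φ`. -/
abbrev IProv {V : Type} (Γ : Set (PropForm V)) (φ : PropForm V) : Prop := Prov False Γ φ

/-- Classical consequence `Γ ⊢_C φ`. -/
abbrev CProv {V : Type} (Γ : Set (PropForm V)) (φ : PropForm V) : Prop := Prov True Γ φ

theorem Prov.mono {V : Type} {cl : Prop} {Γ : Set (PropForm V)} {φ : PropForm V}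
    (h : Prov cl Γ φ) : ∀ {Δ : Set (PropForm V)}, Γ ⊆ Δ → Prov cl Δ φ := by
  induction h with
  | ax hmem => intro Δ hsub; exact Prov.ax (hsub hmem)
  | topI => intro Δ _; exact Prov.topI
  | botE _ ih => intro Δ hsub; exact Prov.botE (ih hsub)
  | andI _ _ ih1 ih2 => intro Δ hsub; exact Prov.andI (ih1 hsub) (ih2 hsub)
  | andE1 _ ih => intro Δ hsub; exact Prov.andE1 (ih hsub)
  | andE2 _ ih => intro Δ hsub; exact Prov.andE2 (ih hsub)
  | orI1 _ ih => intro Δ hsub; exact Prov.orI1 (ih hsub)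
  | orI2 _ ih => intro Δ hsub; exact Prov.orI2 (ih hsub)
  | orE _ _ _ ih1 ih2 ih3 =>
      intro Δ hsub
      exact Prov.orE (ih1 hsub) (ih2 (Set.insert_subset_insert hsub))
        (ih3 (Set.insert_subset_insert hsub))
  | impI _ ih => intro Δ hsub; exact Prov.impI (ih (Set.insert_subset_insert hsub))
  | impE _ _ ih1 ih2 => intro Δ hsub; exact Prov.impE (ih1 hsub) (ih2 hsub)
  | em hcl => intro Δ _; exact Prov.em hcl

theorem Prov.cut {V : Type} {cl : Prop} {Γ : Set (PropForm V)} {φ ψ : PropForm V}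
    (h1 : Prov cl Γ φ) (h2 : Prov cl (insert φ Γ) ψ) : Prov cl Γ ψ :=
  Prov.impE (Prov.impI h2) h1

/-- Single-premise consequence: `φ ⊢ ψ` (intuitionistic when `cl = False`). -/
def Entails {V : Type} (cl : Prop) (φ ψ : PropForm V) : Prop := Prov cl {φ} ψ

theorem Entails.refl {V : Type} {cl : Prop} (φ : PropForm V) : Entails cl φ φ := Prov.ax rfl

theorem Entails.trans' {V : Type} {cl : Prop} {φ ψ χ : PropForm V}
    (h1 : Entails cl φ ψ) (h2 : Entails cl ψ χ) : Entails cl φ χ :=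
  Prov.cut h1 (h2.mono (Set.singleton_subset_iff.mpr (Set.mem_insert _ _)))

theorem Entails.and_congr {V : Type} {cl : Prop} {a b c d : PropForm V}
    (h1 : Entails cl a b) (h2 : Entails cl c d) :
    Entails cl (PropForm.and a c) (PropForm.and b d) := by
  have ha : Prov cl ({PropForm.and a c} : Set (PropForm V)) a := Prov.andE1 (Prov.ax rfl)
  have hc : Prov cl ({PropForm.and a c} : Set (PropForm V)) c := Prov.andE2 (Prov.ax rfl)
  exact Prov.andI
    (Prov.cut ha (h1.mono (Set.singleton_subset_iff.mpr (Set.mem_insert _ _))))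
    (Prov.cut hc (h2.mono (Set.singleton_subset_iff.mpr (Set.mem_insert _ _))))

theorem Entails.or_congr {V : Type} {cl : Prop} {a b c d : PropForm V}
    (h1 : Entails cl a b) (h2 : Entails cl c d) :
    Entails cl (PropForm.or a c) (PropForm.or b d) :=
  Prov.orE (Prov.ax rfl)
    (Prov.orI1 (h1.mono (Set.singleton_subset_iff.mpr (Set.mem_insert _ _))))
    (Prov.orI2 (h2.mono (Set.singleton_subset_iff.mpr (Set.mem_insert _ _))))

/-- Logical equivalence (intuitionistic when `cl = False`, classical when `cl = True`). -/
def provSetoid (cl : Prop) (V : Type) : Setoid (PropForm V) where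
  r φ ψ := Entails cl φ ψ ∧ Entails cl ψ φ
  iseqv := ⟨fun φ => ⟨Entails.refl φ, Entails.refl φ⟩, fun h => ⟨h.2, h.1⟩,
    fun h1 h2 => ⟨h1.1.trans' h2.1, h2.2.trans' h1.2⟩⟩

/-- The Lindenbaum algebra of formulas over `V` modulo logical equivalence.
`Lindenbaum False (Fin n)` is the free Heyting algebra `H_n`,
`Lindenbaum False ℕ` is `H_ω`, and `Lindenbaum True ℕ` is the free Boolean
algebra `B_ω`. -/
def Lindenbaum (cl : Prop) (V : Type) : Type := Quotient (provSetoid cl V)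

/-- The equivalence class of a formula. -/
def Lindenbaum.mk (cl : Prop) {V : Type} (φ : PropForm V) : Lindenbaum cl V :=
  Quotient.mk (provSetoid cl V) φ

/-- The order of the Lindenbaum algebra: `[φ] ≤ [ψ]` iff `φ ⊢ ψ`. -/
def Lindenbaum.le {cl : Prop} {V : Type} : Lindenbaum cl V → Lindenbaum cl V → Prop :=
  Quotient.lift₂ (Entails cl) (by
    intro a b a' b' ha hb
    obtain ⟨ha1, ha2⟩ := ha
    obtain ⟨hb1, hb2⟩ := hb
    exact propext ⟨fun h => (ha2.trans' h).trans' hb1, fun h => (ha1.trans' h).trans' hb2⟩)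

/-- The meet `∧` of the Lindenbaum algebra. -/
def Lindenbaum.inf {cl : Prop} {V : Type} :
    Lindenbaum cl V → Lindenbaum cl V → Lindenbaum cl V :=
  Quotient.map₂ PropForm.and (by
    intro a a' ha b b' hb
    obtain ⟨ha1, ha2⟩ := ha
    obtain ⟨hb1, hb2⟩ := hb
    exact ⟨ha1.and_congr hb1, ha2.and_congr hb2⟩)

/-- The join `∨` of the Lindenbaum algebra. -/
def Lindenbaum.sup {cl : Prop} {V : Type} :
    Lindenbaum cl V → Lindenbaum cl V → Lindenbaum cl V :=
  Quotient.map₂ PropForm.or (by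
    intro a a' ha b b' hb
    obtain ⟨ha1, ha2⟩ := ha
    obtain ⟨hb1, hb2⟩ := hb
    exact ⟨ha1.or_congr hb1, ha2.or_congr hb2⟩)

/-! ### Kripke semantics -/

/-- Kripke forcing over the accessibility relation `R` with valuation `v`. -/
def Forces {V W : Type} (R : W → W → Prop) (v : V → W → Prop) : PropForm V → W → Prop
  | .var x, w => v x w
  | .bot, _ => False
  | .top, _ => True
  | .and φ ψ, w => Forces R v φ w ∧ Forces R v ψ w
  | .or φ ψ, w => Forces R v φ w ∨ Forces R v ψ w
  | .imp φ ψ, w => ∀ u, R w u → Forces R v φ u → Forces R v ψ u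

theorem Forces.persist {V W : Type} {R : W → W → Prop} {v : V → W → Prop}
    (htr : ∀ a b c, R a b → R b c → R a c) (hv : ∀ x a b, R a b → v x a → v x b)
    (φ : PropForm V) : ∀ {a b : W}, R a b → Forces R v φ a → Forces R v φ b := by
  induction φ with
  | var x => intro a b hab h; exact hv x a b hab h
  | bot => intro a b _ h; exact h
  | top => intro a b _ h; exact h
  | and φ ψ ih1 ih2 => intro a b hab h; exact ⟨ih1 hab h.1, ih2 hab h.2⟩
  | or φ ψ ih1 ih2 => intro a b hab h; exact h.imp (ih1 hab) (ih2 hab)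
  | imp φ ψ _ _ => intro a b hab h u hu; exact h u (htr a b u hab hu)

theorem Prov.sound {V W : Type} {R : W → W → Prop} {v : V → W → Prop}
    (hrf : ∀ a, R a a) (htr : ∀ a b c, R a b → R b c → R a c)
    (hv : ∀ x a b, R a b → v x a → v x b) {Γ : Set (PropForm V)} {φ : PropForm V}
    (h : Prov False Γ φ) : ∀ w, (∀ ψ ∈ Γ, Forces R v ψ w) → Forces R v φ w := by
  induction h with
  | ax hmem => intro w hw; exact hw _ hmem
  | topI => intro w _; trivial
  | botE _ ih => intro w hw; exact (ih w hw).elim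
  | andI _ _ ih1 ih2 => intro w hw; exact ⟨ih1 w hw, ih2 w hw⟩
  | andE1 _ ih => intro w hw; exact (ih w hw).1
  | andE2 _ ih => intro w hw; exact (ih w hw).2
  | orI1 _ ih => intro w hw; exact Or.inl (ih w hw)
  | orI2 _ ih => intro w hw; exact Or.inr (ih w hw)
  | orE _ _ _ ih ih1 ih2 =>
      intro w hw
      rcases ih w hw with h | h
      · exact ih1 w (Set.forall_mem_insert.mpr ⟨h, hw⟩)
      · exact ih2 w (Set.forall_mem_insert.mpr ⟨h, hw⟩)
  | impI _ ih =>
      intro w hw u hu hφ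
      exact ih u (Set.forall_mem_insert.mpr
        ⟨hφ, fun ψ hψ => Forces.persist htr hv ψ hu (hw ψ hψ)⟩)
  | impE _ _ ih1 ih2 => intro w hw; exact ih1 w hw w (hrf w) (ih2 w hw)
  | em hcl => exact hcl.elim

/-! ### An independent family of formulas in two variables -/

/-- The pair `(Eₙ, Gₙ)` of formulas in `p = x₀` defining, on the Rieger–Nishimura ladder, the
initial segment `{i | i < n}` and the principal upper set `{i | i = n ∨ i + 2 ≤ n}` of the
point `n`. -/
def ladderForms : ℕ → PropForm (Fin 2) × PropForm (Fin 2)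
  | 0 => (.bot, .var 0)
  | n + 1 => (.or (ladderForms n).1 (ladderForms n).2, .imp (ladderForms n).2 (ladderForms n).1)

/-- The formula `¬q`, where `q = x₁`. -/
def notQ : PropForm (Fin 2) := .imp (.var 1) .bot

/-- The formula `φₙ = (¬q → Eₙ₊₁) → ¬q ∨ (¬q → Eₙ)`. -/
def gen (n : ℕ) : PropForm (Fin 2) :=
  .imp (.imp notQ (ladderForms (n + 1)).1) (.or notQ (.imp notQ (ladderForms n).1))

/-- Worlds of the model: the ladder points, an extra maximal point `tip` (the only world where
`q` holds), the points `mark n`, and a root. -/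
inductive World : Type
  | ladder : ℕ → World
  | tip : World
  | mark : ℕ → World
  | root : World

/-- Accessibility: the ladder carries the Rieger–Nishimura order, `mark n` sees `tip` and the
ladder points `≤ n`, and the root sees everything except the marks with index in `S`. -/
def World.Acc (S : Set ℕ) : World → World → Prop
  | .ladder n, .ladder m => m = n ∨ m + 2 ≤ n
  | .tip, .tip => True
  | .mark n, .ladder m => m ≤ n
  | .mark _, .tip => True
  | .mark n, .mark m => m = n
  | .root, .mark m => m ∉ S
  | .root, _ => True
  | _, _ => False

/-- `p` holds exactly at the ladder point `0`, and `q` exactly at `tip`. -/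
def World.val (x : Fin 2) (w : World) : Prop :=
  if x = 0 then w = .ladder 0 else w = .tip

theorem World.acc_refl (S : Set ℕ) (a : World) : World.Acc S a a := by
  cases a <;> simp [World.Acc]

theorem World.acc_trans (S : Set ℕ) (a b c : World) :
    World.Acc S a b → World.Acc S b c → World.Acc S a c := by
  cases a <;> cases b <;> cases c <;> simp only [World.Acc] <;> grind

theorem World.val_persist (S : Set ℕ) (x : Fin 2) (a b : World) :
    World.Acc S a b → World.val x a → World.val x b := by
  unfold World.val
  split_ifs
  · rintro h rfl
    cases b <;> simp_all [World.Acc]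
  · rintro h rfl
    cases b <;> simp_all [World.Acc]

theorem forces_ladder (S : Set ℕ) (n : ℕ) : ∀ i,
    (Forces (World.Acc S) World.val (ladderForms n).1 (.ladder i) ↔ i < n) ∧
    (Forces (World.Acc S) World.val (ladderForms n).2 (.ladder i) ↔ i = n ∨ i + 2 ≤ n) := by
  induction n with
  | zero => intro i; simp [ladderForms, Forces, World.val]
  | succ n ih =>
      intro i
      refine ⟨?_, ?_⟩
      · simp only [ladderForms, Forces, (ih i).1, (ih i).2]
        omega
      · simp only [ladderForms, Forces]
        constructor
        · intro h
          by_contra hc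
          -- Otherwise `i` sees the point `n`, which lies in `Gₙ` but not in `Eₙ`.
          have := (ih n).1.mp (h (.ladder n) (by simp only [World.Acc]; omega)
            ((ih n).2.mpr (Or.inl rfl)))
          omega
        · intro hi u hu hG
          cases u with
          | ladder m =>
              rw [(ih m).2] at hG
              rw [(ih m).1]
              simp only [World.Acc] at hu
              omega
          | tip => exact hu.elim
          | mark m => exact hu.elim
          | root => exact hu.elim

theorem forces_notQ_ladder (S : Set ℕ) (i : ℕ) :
    Forces (World.Acc S) World.val notQ (.ladder i) := by
  intro u hu hq
  cases u <;> simp_all [World.Acc, Forces, World.val]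

/-- A world seeing `tip` does not force `¬q`. -/
theorem not_forces_notQ (S : Set ℕ) {w : World} (hw : World.Acc S w .tip) :
    ¬ Forces (World.Acc S) World.val notQ w :=
  fun h => h .tip hw (by simp [Forces, World.val])

/-- Since `¬q` holds exactly on the ladder, `¬q → Eₙ` says that all visible ladder points
have index below `n`. -/
theorem forces_notQ_imp (S : Set ℕ) (n : ℕ) (w : World) :
    Forces (World.Acc S) World.val (.imp notQ (ladderForms n).1) w ↔
      ∀ i, World.Acc S w (.ladder i) → i < n := by
  constructor
  · intro h i hi
    exact (forces_ladder S n i).1.mp (h _ hi (forces_notQ_ladder S i))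
  · intro h u hu hq
    cases u with
    | ladder i => exact (forces_ladder S n i).1.mpr (h i hu)
    | tip => exact (not_forces_notQ S (by trivial) hq).elim
    | mark m => exact (not_forces_notQ S (by trivial) hq).elim
    | root => exact (not_forces_notQ S (by trivial) hq).elim

theorem forces_gen_root (S : Set ℕ) (n : ℕ) :
    Forces (World.Acc S) World.val (gen n) .root ↔ n ∈ S := by
  constructor
  · intro h
    by_contra hn
    rcases h (.mark n) hn ((forces_notQ_imp S _ _).mpr fun i hi => Nat.lt_succ_of_le hi)
      with h1 | h1
    · exact not_forces_notQ S (by trivial) h1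
    · exact lt_irrefl n ((forces_notQ_imp S _ _).mp h1 n (le_refl n))
  · intro hn u hu hE
    rw [forces_notQ_imp] at hE
    cases u with
    | ladder i => exact Or.inl (forces_notQ_ladder S i)
    | tip => exact Or.inr ((forces_notQ_imp S _ _).mpr fun i hi => hi.elim)
    | mark m =>
        refine Or.inr ((forces_notQ_imp S _ _).mpr fun i hi => ?_)
        have h1 : m < n + 1 := hE m (le_refl m)
        have h2 : m ≠ n := fun h => hu (h ▸ hn)
        have h3 : i ≤ m := hi
        omega
    | root => exact (lt_irrefl _ (hE (n + 1) trivial)).elim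

/-! ### Finite joins and meets of formulas -/

/-- The disjunction of a list of formulas. -/
def bigOr {V : Type} : List (PropForm V) → PropForm V
  | [] => .bot
  | φ :: l => .or φ (bigOr l)

/-- The conjunction of a list of formulas. -/
def bigAnd {V : Type} : List (PropForm V) → PropForm V
  | [] => .top
  | φ :: l => .and φ (bigAnd l)

theorem Entails.or_elim {V : Type} {φ ψ χ : PropForm V} (h1 : Entails False φ χ)
    (h2 : Entails False ψ χ) : Entails False (.or φ ψ) χ :=
  Prov.orE (Prov.ax rfl) (h1.mono (by simp)) (h2.mono (by simp))

theorem entails_bigOr {V : Type} {φ : PropForm V} {l : List (PropForm V)} (h : φ ∈ l) :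
    Entails False φ (bigOr l) := by
  induction l with
  | nil => simp at h
  | cons ψ l ih =>
      rcases List.mem_cons.mp h with rfl | h
      · exact Prov.orI1 (Prov.ax rfl)
      · exact Prov.orI2 (ih h)

theorem bigOr_entails {V : Type} {χ : PropForm V} {l : List (PropForm V)}
    (h : ∀ φ ∈ l, Entails False φ χ) : Entails False (bigOr l) χ := by
  induction l with
  | nil => exact Prov.botE (Prov.ax rfl)
  | cons ψ l ih =>
      exact (h ψ List.mem_cons_self).or_elim (ih fun φ hφ => h φ (List.mem_cons_of_mem _ hφ))

theorem bigAnd_entails {V : Type} {φ : PropForm V} {l : List (PropForm V)} (h : φ ∈ l) :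
    Entails False (bigAnd l) φ := by
  induction l with
  | nil => simp at h
  | cons ψ l ih =>
      rcases List.mem_cons.mp h with rfl | h
      · exact Prov.andE1 (Prov.ax rfl)
      · exact Entails.trans' (Prov.andE2 (Prov.ax rfl)) (ih h)

theorem forces_bigOr {V W : Type} {R : W → W → Prop} {v : V → W → Prop}
    (l : List (PropForm V)) (w : W) :
    Forces R v (bigOr l) w ↔ ∃ φ ∈ l, Forces R v φ w := by
  induction l with
  | nil => simp [bigOr, Forces]
  | cons ψ l ih => simp [bigOr, Forces, ih]

theorem forces_bigAnd {V W : Type} {R : W → W → Prop} {v : V → W → Prop}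
    (l : List (PropForm V)) (w : W) :
    Forces R v (bigAnd l) w ↔ ∀ φ ∈ l, Forces R v φ w := by
  induction l with
  | nil => simp [bigAnd, Forces]
  | cons ψ l ih => simp [bigAnd, Forces, ih]

/-! ### Embedding a preorder on the natural numbers -/

open Classical in
/-- The formula `F n = ⋁ {F i | i < n, i ≼ n} ∨ (φₙ ∧ ⋀ {F i | i < n, n ≼ i})`; indices `i < n`
not comparable with `n` in the relevant direction contribute `⊥` to the join and `⊤` to the
meet. -/
noncomputable def embed (r : ℕ → ℕ → Prop) (n : ℕ) : PropForm (Fin 2) :=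
  .or (bigOr ((List.finRange n).map fun i : Fin n => if r i n then embed r i else .bot))
    (.and (gen n) (bigAnd ((List.finRange n).map fun i : Fin n => if r n i then embed r i else .top)))
termination_by n
decreasing_by all_goals exact i.isLt

theorem embed_mono (r : ℕ → ℕ → Prop) (htrans : ∀ p q s, r p q → r q s → r p s) (N : ℕ) :
    ∀ m n, m < N → n < N → r m n → Entails False (embed r m) (embed r n) := by
  induction N with
  | zero => intro m n hm; omega
  | succ N ih =>
      intro m n hm hn hmn
      rcases Nat.lt_succ_iff_lt_or_eq.mp hm with hm | rfl <;>
        rcases Nat.lt_succ_iff_lt_or_eq.mp hn with hn | rfl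
      · exact ih m n hm hn hmn
      · rw [embed.eq_1 r n]
        refine Prov.orI1 (entails_bigOr (List.mem_map.mpr ⟨⟨m, hm⟩, List.mem_finRange _, ?_⟩))
        simp [hmn]
      · rw [embed.eq_1 r m]
        refine Entails.or_elim (bigOr_entails fun φ hφ => ?_) ?_
        · obtain ⟨i, _, rfl⟩ := List.mem_map.mp hφ
          split_ifs with hi
          · exact ih i n i.isLt hn (htrans _ _ _ hi hmn)
          · exact Prov.botE (Prov.ax rfl)
        · refine Entails.trans' (Prov.andE2 (Prov.ax rfl))
            (bigAnd_entails (List.mem_map.mpr ⟨⟨n, hn⟩, List.mem_finRange _, ?_⟩))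
          simp [hmn]
      · exact Entails.refl _

/-- At a world forcing exactly the generators with index in an upper set `S`, the formula `F n`
is forced iff `n ∈ S`. -/
theorem forces_embed (r : ℕ → ℕ → Prop) (S : Set ℕ) (hS : ∀ a b, r a b → a ∈ S → b ∈ S)
    (n : ℕ) : Forces (World.Acc S) World.val (embed r n) .root ↔ n ∈ S := by
  induction n using Nat.strong_induction_on with
  | _ n ih =>
      rw [embed]
      simp only [Forces, forces_bigOr, forces_bigAnd, forces_gen_root]
      constructor
      · rintro (⟨φ, hφ, h⟩ | h)
        · obtain ⟨i, _, rfl⟩ := List.mem_map.mp hφ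
          split_ifs at h with hi
          · exact hS _ _ hi ((ih i i.isLt).mp h)
          · exact h.elim
        · exact h.1
      · intro hn
        refine Or.inr ⟨hn, fun φ hφ => ?_⟩
        obtain ⟨i, _, rfl⟩ := List.mem_map.mp hφ
        split_ifs with hi
        · exact (ih i i.isLt).mpr (hS _ _ hi hn)
        · trivial

theorem embed_iff (r : ℕ → ℕ → Prop) (hrefl : ∀ p, r p p)
    (htrans : ∀ p q s, r p q → r q s → r p s) (m n : ℕ) :
    r m n ↔ Entails False (embed r m) (embed r n) := by
  constructor
  · exact embed_mono r htrans (max m n + 1) m n (by omega) (by omega)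
  · intro h
    have hS : ∀ a b, r a b → a ∈ {s | r m s} → b ∈ {s | r m s} :=
      fun a b hab ha => htrans _ _ _ ha hab
    refine (forces_embed r {s | r m s} hS n).mp ?_
    refine Prov.sound (World.acc_refl _) (World.acc_trans _) (World.val_persist _) h .root ?_
    rintro ψ rfl
    exact (forces_embed r {s | r m s} hS m).mpr (hrefl m)

/-- Every countable preorder can be realized inside `2`-variable intuitionistic logic:
there is a map `f` into the formulas of `F_2` with `p ≼ q` iff `f p ⊢ f q`. -/
theorem countable_preorder_into_F2 (P : Type) [Countable P] (r : P → P → Prop)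
    (hrefl : ∀ p, r p p) (htrans : ∀ p q s, r p q → r q s → r p s) :
    ∃ f : P → PropForm (Fin 2), ∀ p q : P, (r p q ↔ Entails False (f p) (f q)) := by
  rcases isEmpty_or_nonempty P with hP | hP
  · exact ⟨fun _ => .bot, fun p => hP.elim p⟩
  · obtain ⟨g, hg⟩ := exists_surjective_nat P
    refine ⟨fun p => embed (fun a b => r (g a) (g b)) (Function.surjInv hg p), fun p q => ?_⟩
    rw [← embed_iff (fun a b => r (g a) (g b)) (fun _ => hrefl _)
      (fun _ _ _ => htrans _ _ _), Function.surjInv_eq hg, Function.surjInv_eq hg]
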